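/- (a) For n ≥ 3: |E(𝒯_A³)| ≤ 5·β_A/n. (b) For n ≥ 4: |E(𝒯_A⁴) − 3| ≤ 97·δ_A/n. -/

import Mathlib

open Finset MeasureTheory

/-- Density of the standard normal distribution. -/
noncomputable def gaussD (x : ℝ) : ℝ := (Real.sqrt (2 * Real.pi))⁻¹ * Real.exp (-(x ^ 2) / 2)

/-- Distribution function of the standard normal distribution. -/
noncomputable def gaussCDF (x : ℝ) : ℝ := ∫ t in Set.Iic x, gaussD t

section RankDefs

variable {m : ℕ}

/-- Row mean `a_{i·}`. -/
noncomputable def rowMean (A : Matrix (Fin m) (Fin m) ℝ) (i : Fin m) : ℝ := (∑ j, A i j) / (m : ℝ)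

/-- Column mean `a_{·j}`. -/
noncomputable def colMean (A : Matrix (Fin m) (Fin m) ℝ) (j : Fin m) : ℝ := (∑ i, A i j) / (m : ℝ)

/-- Grand mean `a_{··}`. -/
noncomputable def totMean (A : Matrix (Fin m) (Fin m) ℝ) : ℝ := (∑ i, ∑ j, A i j) / (m : ℝ) ^ 2

/-- Centered entries `a_{ij} − a_{i·} − a_{·j} + a_{··}`. -/
noncomputable def ctr (A : Matrix (Fin m) (Fin m) ℝ) (i j : Fin m) : ℝ :=
  A i j - rowMean A i - colMean A j + totMean A

/-- `σ_A²`. -/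
noncomputable def sigma2 (A : Matrix (Fin m) (Fin m) ℝ) : ℝ :=
  (∑ i, ∑ j, ctr A i j ^ 2) / ((m : ℝ) - 1)

/-- `σ_A`. -/
noncomputable def sdev (A : Matrix (Fin m) (Fin m) ℝ) : ℝ := Real.sqrt (sigma2 A)

/-- Standardized matrix `Â = (â_{ij})`. -/
noncomputable def hatM (A : Matrix (Fin m) (Fin m) ℝ) : Matrix (Fin m) (Fin m) ℝ :=
  fun i j => ctr A i j / sdev A

/-- `μ_A = n·a_{··}`. -/
noncomputable def muM (A : Matrix (Fin m) (Fin m) ℝ) : ℝ := (m : ℝ) * totMean A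

/-- The linear rank statistic `T_A(π) = Σ_i a_{iπ(i)}`. -/
noncomputable def rankT (A : Matrix (Fin m) (Fin m) ℝ) (π : Equiv.Perm (Fin m)) : ℝ :=
  ∑ i, A i (π i)

/-- Expectation with respect to the uniform distribution on permutations. -/
noncomputable def permExp (f : Equiv.Perm (Fin m) → ℝ) : ℝ :=
  (∑ π : Equiv.Perm (Fin m), f π) / (Nat.factorial m : ℝ)

/-- The standardized rank statistic `𝒯_A = (T_A − μ_A)/σ_A`. -/
noncomputable def rankTstd (A : Matrix (Fin m) (Fin m) ℝ) (π : Equiv.Perm (Fin m)) : ℝ :=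
  (rankT A π - muM A) / sdev A

/-- `F_A`, the distribution function of `T_A`. -/
noncomputable def Fr (A : Matrix (Fin m) (Fin m) ℝ) (z : ℝ) : ℝ :=
  permExp (fun π => if rankT A π ≤ z then (1 : ℝ) else 0)

/-- `ℱ_A`, the distribution function of `𝒯_A`. -/
noncomputable def Fstd (A : Matrix (Fin m) (Fin m) ℝ) (z : ℝ) : ℝ :=
  permExp (fun π => if rankTstd A π ≤ z then (1 : ℝ) else 0)

/-- `β_A = Σ_{i,j} |â_{ij}|³`. -/
noncomputable def betaM (A : Matrix (Fin m) (Fin m) ℝ) : ℝ := ∑ i, ∑ j, |hatM A i j| ^ 3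

/-- `δ_A = Σ_{i,j} |â_{ij}|⁴`. -/
noncomputable def deltaM (A : Matrix (Fin m) (Fin m) ℝ) : ℝ := ∑ i, ∑ j, |hatM A i j| ^ 4

/-- `η_A = Σ_{i,j} |â_{ij}|⁵`. -/
noncomputable def etaM (A : Matrix (Fin m) (Fin m) ℝ) : ℝ := ∑ i, ∑ j, |hatM A i j| ^ 5

/-- `D_A = (δ_A/n)^{1/2}`. -/
noncomputable def DM (A : Matrix (Fin m) (Fin m) ℝ) : ℝ := Real.sqrt (deltaM A / (m : ℝ))

/-- `E_A = (η_A/n)^{1/3}`. -/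
noncomputable def EM (A : Matrix (Fin m) (Fin m) ℝ) : ℝ := (etaM A / (m : ℝ)) ^ ((1 : ℝ) / 3)

/-- `λ_{1,A} = (1/n)Σ_{i,j} â_{ij}³`. -/
noncomputable def lam1 (A : Matrix (Fin m) (Fin m) ℝ) : ℝ := (∑ i, ∑ j, hatM A i j ^ 3) / (m : ℝ)

/-- `λ_{2,A}`. -/
noncomputable def lam2 (A : Matrix (Fin m) (Fin m) ℝ) : ℝ :=
  (∑ i, ∑ j, hatM A i j ^ 4) / (m : ℝ) + 3 / (m : ℝ)
    - 3 / (m : ℝ) ^ 2 *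
        ∑ i, ∑ j, ∑ k, (hatM A i j ^ 2 * hatM A i k ^ 2 + hatM A i j ^ 2 * hatM A k j ^ 2)

/-- First-order Edgeworth expansion `e_{1,A}`. -/
noncomputable def edge1 (A : Matrix (Fin m) (Fin m) ℝ) (x : ℝ) : ℝ :=
  gaussCDF x - gaussD x * (lam1 A / 6) * (x ^ 2 - 1)

/-- Second-order Edgeworth expansion `e_{2,A}`. -/
noncomputable def edge2 (A : Matrix (Fin m) (Fin m) ℝ) (x : ℝ) : ℝ :=
  gaussCDF x - gaussD x *
    (lam1 A / 6 * (x ^ 2 - 1) + lam2 A / 24 * (x ^ 3 - 3 * x)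
      + lam1 A ^ 2 / 72 * (x ^ 5 - 10 * x ^ 3 + 15 * x))

/-- `k`-th iterated difference `Δ_y^k G`. -/
noncomputable def Δiter (y : ℝ) (k : ℕ) (G : ℝ → ℝ) : ℝ → ℝ :=
  (fun (G : ℝ → ℝ) (z : ℝ) => G (z + y) - G z)^[k] G

/-- The interpolating polynomial `P_y^k(x; z, F)` of `F` at the points `z, z+y, …, z+ky`. -/
noncomputable def interp (y : ℝ) (k : ℕ) (z : ℝ) (F : ℝ → ℝ) (x : ℝ) : ℝ :=
  F z + ∑ s ∈ Finset.Icc 1 k,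
    Δiter y s F z * ∏ i ∈ Finset.Icc 1 s, (x - z - ((i : ℝ) - 1) * y) / ((i : ℝ) * y)

end RankDefs

/-!
Expanding a power of `∑ i, b i (π i)` by coincidences among the indices gives sums over tuples of
pairwise distinct rows. The symmetric group acts transitively on such tuples, so the expectation
of each of these sums is a sum over tuples of distinct rows and tuples of distinct columns, divided
by the number of column tuples. When all row and column sums of `b` vanish, inclusion–exclusion over
coincidences collapses these double sums: the third moment becomes a multiple of `∑ b³`, and the
fourth moment a combination of `(∑ b²)²`, `∑ b⁴`, the squared row and column sums of `b²`, and the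
squared inner products of columns. The normalization `∑ b² = n - 1` makes the leading term of the
fourth moment equal to `3`, and Cauchy–Schwarz bounds everything else by `∑ b⁴`.
-/

section InjectiveSums

variable {ι R : Type*} [Fintype ι] {k : ℕ}

/-- The sum of `w 0 i₀ * ⋯ * w (k - 1) iₖ₋₁` over all `k`-tuples of pairwise distinct indices,
which are encoded as embeddings `Fin k ↪ ι`. -/
noncomputable def injSum [CommSemiring R] (w : Fin k → ι → R) : R :=
  ∑ x : Fin k ↪ ι, ∏ a, w a (x a)

section CommSemiring

variable [CommSemiring R]

lemma injSum_comp_perm (w : Fin k → ι → R) (σ : Equiv.Perm (Fin k)) :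
    injSum (w ∘ σ) = injSum w := by
  refine Fintype.sum_equiv (σ.embeddingCongr (Equiv.refl ι)) _ _ fun x => ?_
  exact Fintype.prod_equiv σ _ _ fun a => by simp

lemma injSum_one (w : Fin 1 → ι → R) : injSum w = ∑ i, w 0 i :=
  Fintype.sum_equiv Equiv.uniqueEmbeddingEquivResult _ _ fun x => by simp; rfl

lemma injSum_vecCons_eq_sum_compl [DecidableEq ι] (u : ι → R) (w : Fin k → ι → R) :
    injSum (Matrix.vecCons u w) =
      ∑ x : Fin k ↪ ι, (∑ i ∈ (univ.map x)ᶜ, u i) * ∏ a, w a (x a) := by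
  rw [injSum, ← (Equiv.embeddingFinSucc k ι).symm.sum_comp, Fintype.sum_sigma]
  refine Fintype.sum_congr _ _ fun x => ?_
  have mem_compl_iff (i : ι) : i ∈ (univ.map x)ᶜ ↔ i ∉ Set.range x := by simp
  rw [Finset.sum_mul, Finset.sum_subtype (F := inferInstance) _ mem_compl_iff]
  simp [Fin.prod_univ_succ]

/-- The index of a further factor either differs from all the others or equals exactly one. -/
lemma sum_mul_injSum (u : ι → R) (w : Fin k → ι → R) :
    (∑ i, u i) * injSum w =
      injSum (Matrix.vecCons u w) + ∑ a, injSum (Pi.mulSingle a u * w) := by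
  classical
  have prod_merge (a : Fin k) (x : Fin k ↪ ι) :
      ∏ c, (Pi.mulSingle a u * w : Fin k → ι → R) c (x c) = u (x a) * ∏ c, w c (x c) := by
    simp only [Pi.mul_apply, Finset.prod_mul_distrib]
    rw [Fintype.prod_eq_single a fun c hc => by simp [hc], Pi.mulSingle_eq_same]
  rw [injSum_vecCons_eq_sum_compl]
  simp only [injSum, prod_merge, Finset.mul_sum]
  rw [Finset.sum_comm (s := univ (α := Fin k)), ← Finset.sum_add_distrib]
  refine Fintype.sum_congr _ _ fun x => ?_
  rw [← Finset.sum_compl_add_sum (univ.map x) u, Finset.sum_map, add_mul, Finset.sum_mul univ]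

end CommSemiring

section CommRing

variable [CommRing R]

lemma injSum_vecCons (u : ι → R) (w : Fin k → ι → R) :
    injSum (Matrix.vecCons u w) =
      (∑ i, u i) * injSum w - ∑ a, injSum (Pi.mulSingle a u * w) :=
  eq_sub_of_add_eq (sum_mul_injSum u w).symm

lemma injSum_two (w : Fin 2 → ι → R) :
    injSum w = (∑ i, w 0 i) * (∑ i, w 1 i) - ∑ i, w 0 i * w 1 i := by
  obtain ⟨u, v, rfl⟩ : ∃ u v, w = ![u, v] :=
    ⟨w 0, w 1, by ext a; fin_cases a <;> rfl⟩
  simp [injSum_vecCons, injSum_one]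

lemma injSum_three (w : Fin 3 → ι → R) :
    injSum w = (∑ i, w 0 i) * (∑ i, w 1 i) * (∑ i, w 2 i) - (∑ i, w 0 i * w 1 i) * (∑ i, w 2 i)
      - (∑ i, w 0 i * w 2 i) * (∑ i, w 1 i) - (∑ i, w 0 i) * (∑ i, w 1 i * w 2 i)
      + 2 * ∑ i, w 0 i * w 1 i * w 2 i := by
  obtain ⟨u, v, z, rfl⟩ : ∃ u v z, w = ![u, v, z] :=
    ⟨w 0, w 1, w 2, by ext a; fin_cases a <;> rfl⟩
  simp only [injSum_vecCons u, injSum_two, Fin.sum_univ_two, Pi.mul_apply, Matrix.cons_val,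
    Pi.mulSingle_eq_same, Pi.mulSingle_eq_of_ne, ne_eq, one_ne_zero, zero_ne_one,
    not_false_eq_true, Pi.one_apply, one_mul, sum_sub_distrib, mul_left_comm, mul_assoc]
  ring

lemma injSum_three_of_sum_eq_zero (w : Fin 3 → ι → R) (h₁ : ∑ i, w 1 i = 0)
    (h₂ : ∑ i, w 2 i = 0) :
    injSum w = 2 * ∑ i, w 0 i * w 1 i * w 2 i - (∑ i, w 0 i) * (∑ i, w 1 i * w 2 i) := by
  rw [injSum_three, h₁, h₂]
  ring

lemma injSum_four_of_sum_eq_zero (w : Fin 4 → ι → R) (h : ∀ a, ∑ i, w a i = 0) :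
    injSum w = (∑ i, w 0 i * w 1 i) * (∑ i, w 2 i * w 3 i)
      + (∑ i, w 0 i * w 2 i) * (∑ i, w 1 i * w 3 i)
      + (∑ i, w 0 i * w 3 i) * (∑ i, w 1 i * w 2 i) - 6 * ∑ i, ∏ a, w a i := by
  obtain ⟨u, v, y, z, rfl⟩ : ∃ u v y z, w = ![u, v, y, z] :=
    ⟨w 0, w 1, w 2, w 3, by ext a; fin_cases a <;> rfl⟩
  obtain ⟨hu, hv, hy, hz⟩ : (∑ i, u i = 0) ∧ (∑ i, v i = 0) ∧ (∑ i, y i = 0) ∧ ∑ i, z i = 0 :=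
    ⟨h 0, h 1, h 2, h 3⟩
  simp only [injSum_vecCons u, injSum_three, hu, hv, hy, hz, Fin.sum_univ_three,
    Fin.prod_univ_four, Matrix.cons_val, Pi.mul_apply, Pi.mulSingle_eq_same,
    Pi.mulSingle_eq_of_ne, ne_eq, Fin.reduceEq, not_false_eq_true, Pi.one_apply, one_mul,
    mul_assoc, mul_left_comm]
  ring

lemma sum_injSum_pairings {u v : ι → R} (hu : ∑ i, u i = 0) (hv : ∑ i, v i = 0) :
    injSum ![u, u, v, v] + injSum ![u, v, u, v] + injSum ![u, v, v, u] =
      3 * ((∑ i, u i ^ 2) * ∑ i, v i ^ 2) + 6 * (∑ i, u i * v i) ^ 2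
        - 18 * ∑ i, u i ^ 2 * v i ^ 2 := by
  simp only [injSum_four_of_sum_eq_zero, Fin.forall_fin_succ, hu, hv, Fin.prod_univ_four,
    Matrix.cons_val, Matrix.cons_val_succ, Matrix.cons_val_fin_one, implies_true, and_self,
    fun i => mul_comm (v i) (u i)]
  ring_nf

end CommRing

end InjectiveSums

section PowerSums

variable {ι R : Type*} [Fintype ι] [CommSemiring R] {k : ℕ}

/-- The augmented monomial symmetric sum of `x`: the sum of `x i₀ ^ e 0 * ⋯ * x iₖ₋₁ ^ e (k - 1)`
over all `k`-tuples of pairwise distinct indices. -/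
noncomputable def augMonomialSum (x : ι → R) (e : Fin k → ℕ) : R :=
  injSum fun a i => x i ^ e a

lemma augMonomialSum_eq_of_comp_perm_eq (x : ι → R) {e e' : Fin k → ℕ} (σ : Equiv.Perm (Fin k))
    (h : e ∘ σ = e') : augMonomialSum x e' = augMonomialSum x e :=
  h ▸ injSum_comp_perm (fun a i => x i ^ e a) σ

lemma sum_mul_augMonomialSum (x : ι → R) (e : Fin k → ℕ) :
    (∑ i, x i) * augMonomialSum x e =
      augMonomialSum x (Matrix.vecCons 1 e) + ∑ a, augMonomialSum x (e + Pi.single a 1) := by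
  unfold augMonomialSum
  rw [sum_mul_injSum]
  congr 1
  · congr 1
    ext c i
    cases c using Fin.cases <;> simp
  · refine Fintype.sum_congr _ _ fun a => ?_
    congr 1
    ext c i
    obtain rfl | h := eq_or_ne c a <;> simp [*, pow_succ']

lemma sum_eq_augMonomialSum (x : ι → R) : ∑ i, x i = augMonomialSum x ![1] := by
  simp [augMonomialSum, injSum_one]

lemma sum_sq_eq_augMonomialSum (x : ι → R) :
    (∑ i, x i) ^ 2 = augMonomialSum x ![1, 1] + augMonomialSum x ![2] := by
  rw [pow_two]
  nth_rw 2 [sum_eq_augMonomialSum]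
  rw [sum_mul_augMonomialSum]
  simp [Matrix.vecHead]

lemma sum_pow_three_eq_augMonomialSum (x : ι → R) :
    (∑ i, x i) ^ 3 = augMonomialSum x ![1, 1, 1] + 3 * augMonomialSum x ![2, 1]
      + augMonomialSum x ![3] := by
  have sort_two_one : augMonomialSum x ![1, 2] = augMonomialSum x ![2, 1] :=
    augMonomialSum_eq_of_comp_perm_eq x (Equiv.swap 0 1) (by decide)
  rw [pow_succ', sum_sq_eq_augMonomialSum, mul_add, sum_mul_augMonomialSum, sum_mul_augMonomialSum]
  simp only [Fin.sum_univ_one, Fin.sum_univ_two, Matrix.cons_add, Matrix.empty_add_empty,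
    Matrix.vecHead, Matrix.vecTail, Function.comp_apply, Fin.succ_zero_eq_one, Pi.single_apply,
    ↓reduceIte, one_ne_zero, zero_ne_one, add_zero, Nat.reduceAdd, sort_two_one]
  ring

lemma sum_pow_four_eq_augMonomialSum (x : ι → R) :
    (∑ i, x i) ^ 4 = augMonomialSum x ![1, 1, 1, 1] + 6 * augMonomialSum x ![2, 1, 1]
      + 3 * augMonomialSum x ![2, 2] + 4 * augMonomialSum x ![3, 1] + augMonomialSum x ![4] := by
  have sort_three_one : augMonomialSum x ![1, 3] = augMonomialSum x ![3, 1] :=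
    augMonomialSum_eq_of_comp_perm_eq x (Equiv.swap 0 1) (by decide)
  have sort_middle : augMonomialSum x ![1, 2, 1] = augMonomialSum x ![2, 1, 1] :=
    augMonomialSum_eq_of_comp_perm_eq x (Equiv.swap 0 1) (by decide)
  have sort_last : augMonomialSum x ![1, 1, 2] = augMonomialSum x ![2, 1, 1] :=
    augMonomialSum_eq_of_comp_perm_eq x (Equiv.swap 0 2) (by decide)
  rw [pow_succ', sum_pow_three_eq_augMonomialSum, mul_add, mul_add, mul_left_comm,
    sum_mul_augMonomialSum, sum_mul_augMonomialSum, sum_mul_augMonomialSum]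
  simp only [Fin.sum_univ_one, Fin.sum_univ_two, Fin.sum_univ_three, Matrix.cons_add,
    Matrix.empty_add_empty, Matrix.vecHead, Matrix.vecTail, Function.comp_apply,
    Fin.succ_zero_eq_one, Fin.succ_one_eq_two, Pi.single_apply, ↓reduceIte, one_ne_zero,
    zero_ne_one, Fin.reduceEq, add_zero, Nat.reduceAdd, sort_three_one, sort_middle, sort_last]
  ring

end PowerSums

section DoubleSums

variable {α β R : Type*} [Fintype α] [Fintype β] {k : ℕ}

/-- The sum of `B 0 i₀ j₀ * ⋯ * B (k - 1) iₖ₋₁ jₖ₋₁` over all `k`-tuples of pairwise distinct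
rows and all `k`-tuples of pairwise distinct columns. -/
noncomputable def doubleInjSum [CommSemiring R] (B : Fin k → α → β → R) : R :=
  ∑ x : Fin k ↪ α, injSum fun a => B a (x a)

/-- All row sums and all column sums vanish. The array is kept as a plain function, so that its
powers are entrywise. -/
structure IsDoublyCentered [AddCommMonoid R] (b : α → β → R) : Prop where
  row_sum_eq_zero : ∀ i, ∑ j, b i j = 0
  col_sum_eq_zero : ∀ j, ∑ i, b i j = 0

lemma doubleInjSum_one [CommSemiring R] (B : Fin 1 → α → β → R) :
    doubleInjSum B = ∑ i, ∑ j, B 0 i j := by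
  have rows := injSum_one fun (_ : Fin 1) i => ∑ j, B 0 i j
  simp only [injSum, Fin.prod_univ_one] at rows
  simp only [doubleInjSum, injSum_one, rows]

variable [CommRing R]

lemma doubleInjSum_two (B : Fin 2 → α → β → R) :
    doubleInjSum B = (∑ i, ∑ j, B 0 i j) * (∑ i, ∑ j, B 1 i j)
      - ∑ i, (∑ j, B 0 i j) * (∑ j, B 1 i j) - ∑ j, (∑ i, B 0 i j) * (∑ i, B 1 i j)
      + ∑ i, ∑ j, B 0 i j * B 1 i j := by
  have exchange : doubleInjSum B =
      injSum (fun a i => ∑ j, B a i j) - ∑ j, injSum fun a i => B a i j := by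
    simp only [doubleInjSum, injSum_two (fun a => B a _), Finset.sum_sub_distrib]
    rw [Finset.sum_comm]
    simp only [injSum, Fin.prod_univ_two]
  rw [exchange]
  simp only [injSum_two, Finset.sum_sub_distrib]
  rw [Finset.sum_comm (f := fun j i => B 0 i j * B 1 i j)]
  ring

lemma doubleInjSum_three_of_isDoublyCentered (B : Fin 3 → α → β → R)
    (h₁ : IsDoublyCentered (B 1)) (h₂ : IsDoublyCentered (B 2)) :
    doubleInjSum B = 4 * ∑ i, ∑ j, B 0 i j * B 1 i j * B 2 i j
      - 2 * ∑ j, (∑ i, B 0 i j) * (∑ i, B 1 i j * B 2 i j)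
      - 2 * ∑ i, (∑ j, B 0 i j) * (∑ j, B 1 i j * B 2 i j)
      + (∑ i, ∑ j, B 0 i j) * (∑ i, ∑ j, B 1 i j * B 2 i j) := by
  have exchange : doubleInjSum B = 2 * ∑ j, injSum (fun a i => B a i j)
      - ∑ j, injSum ![fun i => ∑ j', B 0 i j', fun i => B 1 i j, fun i => B 2 i j] := by
    have inner (x : Fin 3 ↪ α) : injSum (fun a => B a (x a)) =
        2 * ∑ j, B 0 (x 0) j * B 1 (x 1) j * B 2 (x 2) j
          - ∑ j, (∑ j', B 0 (x 0) j') * B 1 (x 1) j * B 2 (x 2) j := by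
      simp only [injSum_three_of_sum_eq_zero (fun a => B a (x a)) (h₁.row_sum_eq_zero _)
        (h₂.row_sum_eq_zero _), Finset.mul_sum, mul_assoc]
    simp only [doubleInjSum, inner, Finset.sum_sub_distrib, ← Finset.mul_sum]
    rw [Finset.sum_comm, Finset.sum_comm (s := univ (α := Fin 3 ↪ α)) (t := univ (α := β))]
    simp [injSum, Fin.prod_univ_three]
  rw [exchange]
  simp only [injSum_three_of_sum_eq_zero, h₁.col_sum_eq_zero, h₂.col_sum_eq_zero,
    Matrix.cons_val, Finset.sum_sub_distrib, ← Finset.mul_sum]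
  rw [Finset.sum_comm (f := fun j i => B 0 i j * B 1 i j * B 2 i j),
    Finset.sum_comm (f := fun j i => B 1 i j * B 2 i j),
    Finset.sum_comm (f := fun j i => (∑ j', B 0 i j') * B 1 i j * B 2 i j)]
  simp only [mul_assoc, ← Finset.mul_sum]
  ring

lemma doubleInjSum_four_eq_sum_injSum_columns {b : α → β → R} (h : ∀ i, ∑ j, b i j = 0) :
    doubleInjSum (fun _ : Fin 4 => b) =
      (∑ j, ∑ k, (injSum ![(b · j), (b · j), (b · k), (b · k)]
        + injSum ![(b · j), (b · k), (b · j), (b · k)]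
        + injSum ![(b · j), (b · k), (b · k), (b · j)]))
      - 6 * ∑ j, injSum (fun (_ : Fin 4) i => b i j) := by
  have inner (x : Fin 4 ↪ α) : injSum (fun a => b (x a)) =
      (∑ j, ∑ k, (b (x 0) j * b (x 1) j * b (x 2) k * b (x 3) k
        + b (x 0) j * b (x 1) k * b (x 2) j * b (x 3) k
        + b (x 0) j * b (x 1) k * b (x 2) k * b (x 3) j)) - 6 * ∑ j, ∏ a, b (x a) j := by
    rw [injSum_four_of_sum_eq_zero _ fun a => h (x a)]
    simp only [Finset.sum_mul_sum, ← Finset.sum_add_distrib]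
    congr 1
    exact Fintype.sum_congr _ _ fun j => Fintype.sum_congr _ _ fun k => by ring
  simp only [doubleInjSum, inner]
  simp [injSum, Finset.sum_comm (s := univ (α := Fin 4 ↪ α)) (t := univ (α := β)),
    Finset.sum_add_distrib, ← Finset.mul_sum, Fin.prod_univ_four]

lemma doubleInjSum_four_of_isDoublyCentered {b : α → β → R} (hb : IsDoublyCentered b) :
    doubleInjSum (fun _ : Fin 4 => b) = 3 * (∑ i, ∑ j, b i j ^ 2) ^ 2
      + 6 * ∑ j, ∑ k, (∑ i, b i j * b i k) ^ 2
      - 18 * ∑ i, (∑ j, b i j ^ 2) ^ 2 - 18 * ∑ j, (∑ i, b i j ^ 2) ^ 2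
      + 36 * ∑ i, ∑ j, b i j ^ 4 := by
  have equal_columns (j : β) : injSum (fun (_ : Fin 4) i => b i j) =
      3 * (∑ i, b i j ^ 2) ^ 2 - 6 * ∑ i, b i j ^ 4 := by
    rw [injSum_four_of_sum_eq_zero _ fun _ => hb.col_sum_eq_zero j]
    simp only [← pow_two, Finset.prod_const, Finset.card_univ, Fintype.card_fin]
    ring
  have sum_rows_sq : ∑ i, (∑ j, b i j ^ 2) ^ 2 = ∑ j, ∑ k, ∑ i, b i j ^ 2 * b i k ^ 2 := by
    simp only [pow_two (∑ _, _), Finset.sum_mul_sum]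
    exact Finset.sum_comm_cycle.symm
  simp only [doubleInjSum_four_eq_sum_injSum_columns hb.row_sum_eq_zero, equal_columns,
    sum_injSum_pairings (hb.col_sum_eq_zero _) (hb.col_sum_eq_zero _), sum_rows_sq,
    Finset.sum_add_distrib, Finset.sum_sub_distrib, ← Finset.mul_sum, ← Finset.sum_mul]
  rw [Finset.sum_comm (f := fun i j => b i j ^ 2), Finset.sum_comm (f := fun i j => b i j ^ 4)]
  ring

end DoubleSums

section DoublePowerSums

variable {α β R : Type*} [Fintype α] [Fintype β] [CommRing R] {k : ℕ}

/-- The analogue of `augMonomialSum` for an array: the sum of `∏ a, b iₐ jₐ ^ e a` over all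
`k`-tuples of pairwise distinct rows and all `k`-tuples of pairwise distinct columns. -/
noncomputable def doublePowSum (b : α → β → R) (e : Fin k → ℕ) : R :=
  doubleInjSum fun a i j => b i j ^ e a

lemma doublePowSum_one (b : α → β → R) (p : ℕ) :
    doublePowSum b ![p] = ∑ i, ∑ j, b i j ^ p := by
  simp [doublePowSum, doubleInjSum_one]

lemma doublePowSum_two_two (b : α → β → R) :
    doublePowSum b ![2, 2] = (∑ i, ∑ j, b i j ^ 2) ^ 2 - ∑ i, (∑ j, b i j ^ 2) ^ 2
      - ∑ j, (∑ i, b i j ^ 2) ^ 2 + ∑ i, ∑ j, b i j ^ 4 := by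
  simp [doublePowSum, doubleInjSum_two, ← pow_two, ← pow_mul]

namespace IsDoublyCentered

variable {b : α → β → R}

lemma doublePowSum_pow_one (hb : IsDoublyCentered b) (p : ℕ) :
    doublePowSum b ![p, 1] = ∑ i, ∑ j, b i j ^ (p + 1) := by
  simp [doublePowSum, doubleInjSum_two, hb.row_sum_eq_zero, hb.col_sum_eq_zero, pow_succ]

lemma doublePowSum_pow_one_one (hb : IsDoublyCentered b) (p : ℕ) :
    doublePowSum b ![p, 1, 1] = 4 * ∑ i, ∑ j, b i j ^ (p + 2)
      - 2 * ∑ j, (∑ i, b i j ^ p) * ∑ i, b i j ^ 2 - 2 * ∑ i, (∑ j, b i j ^ p) * ∑ j, b i j ^ 2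
      + (∑ i, ∑ j, b i j ^ p) * ∑ i, ∑ j, b i j ^ 2 := by
  rw [doublePowSum, doubleInjSum_three_of_isDoublyCentered _ (by simpa) (by simpa)]
  simp [pow_add, pow_two, mul_assoc]

lemma doublePowSum_one_one_one (hb : IsDoublyCentered b) :
    doublePowSum b ![1, 1, 1] = 4 * ∑ i, ∑ j, b i j ^ 3 := by
  simp [hb.doublePowSum_pow_one_one, hb.row_sum_eq_zero, hb.col_sum_eq_zero]

lemma doublePowSum_two_one_one (hb : IsDoublyCentered b) :
    doublePowSum b ![2, 1, 1] = (∑ i, ∑ j, b i j ^ 2) ^ 2 - 2 * ∑ i, (∑ j, b i j ^ 2) ^ 2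
      - 2 * ∑ j, (∑ i, b i j ^ 2) ^ 2 + 4 * ∑ i, ∑ j, b i j ^ 4 := by
  rw [hb.doublePowSum_pow_one_one]
  simp only [← pow_two]
  ring

lemma doublePowSum_one_one_one_one (hb : IsDoublyCentered b) :
    doublePowSum b ![1, 1, 1, 1] = 3 * (∑ i, ∑ j, b i j ^ 2) ^ 2
      + 6 * ∑ j, ∑ k, (∑ i, b i j * b i k) ^ 2
      - 18 * ∑ i, (∑ j, b i j ^ 2) ^ 2 - 18 * ∑ j, (∑ i, b i j ^ 2) ^ 2
      + 36 * ∑ i, ∑ j, b i j ^ 4 := by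
  rw [← doubleInjSum_four_of_isDoublyCentered hb, doublePowSum]
  congr! 4 with a i j
  fin_cases a <;> simp

end IsDoublyCentered

end DoublePowerSums

section Averaging

lemma card_nsmul_sum_smul {G α M : Type*} [Group G] [Fintype G] [MulAction G α] [Fintype α]
    [MulAction.IsPretransitive G α] [AddCommMonoid M] (φ : α → M) (x : α) :
    Fintype.card α • ∑ g : G, φ (g • x) = Fintype.card G • ∑ y, φ y := by
  have sum_smul_eq (y : α) : ∑ g : G, φ (g • y) = ∑ g : G, φ (g • x) := by
    obtain ⟨h, rfl⟩ := MulAction.exists_smul_eq G x y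
    simp only [← mul_smul]
    exact Equiv.sum_comp (Equiv.mulRight h) fun g => φ (g • x)
  calc Fintype.card α • ∑ g : G, φ (g • x) = ∑ y : α, ∑ g : G, φ (g • y) := by
        simp [sum_smul_eq]
    _ = ∑ g : G, ∑ y, φ (g • y) := Finset.sum_comm
    _ = Fintype.card G • ∑ y, φ y := by
        simp [fun g : G => Equiv.sum_comp (MulAction.toPerm g) φ, ← MulAction.toPerm_apply]

variable {n k : ℕ}

lemma permExp_add (f g : Equiv.Perm (Fin n) → ℝ) :
    permExp (fun π => f π + g π) = permExp f + permExp g := by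
  simp [permExp, Finset.sum_add_distrib, add_div]

lemma permExp_const_mul (c : ℝ) (f : Equiv.Perm (Fin n) → ℝ) :
    permExp (fun π => c * f π) = c * permExp f := by
  simp only [permExp, ← Finset.mul_sum, mul_div_assoc]

lemma permExp_sum {ι : Type*} (s : Finset ι) (f : ι → Equiv.Perm (Fin n) → ℝ) :
    permExp (fun π => ∑ x ∈ s, f x π) = ∑ x ∈ s, permExp (f x) := by
  simp only [permExp, Finset.sum_comm (s := univ), Finset.sum_div]

/-- The symmetric group acts transitively on tuples of pairwise distinct points. -/
lemma permExp_embedding (φ : (Fin k ↪ Fin n) → ℝ) (x : Fin k ↪ Fin n) :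
    permExp (fun π => φ (x.trans π.toEmbedding)) = (∑ y, φ y) / n.descFactorial k := by
  have : MulAction.IsPretransitive (Equiv.Perm (Fin n)) (Fin k ↪ Fin n) :=
    Equiv.Perm.isMultiplyPretransitive (Fin n) k
  have average := card_nsmul_sum_smul (G := Equiv.Perm (Fin n)) φ x
  have card_pos : 0 < Fintype.card (Fin k ↪ Fin n) := Fintype.card_pos_iff.mpr ⟨x⟩
  simp only [Fintype.card_embedding_eq, Fintype.card_perm, Fintype.card_fin, nsmul_eq_mul]
    at average card_pos
  rw [permExp, div_eq_div_iff (by positivity) (by positivity), mul_comm, mul_comm (∑ y, φ y)]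
  exact average

lemma permExp_injSum (B : Fin k → Fin n → Fin n → ℝ) :
    permExp (fun π => injSum fun a i => B a i (π i)) = doubleInjSum B / n.descFactorial k := by
  simp only [injSum, doubleInjSum, permExp_sum, Finset.sum_div (univ (α := Fin k ↪ Fin n))]
  refine Fintype.sum_congr _ _ fun x => ?_
  rw [← Finset.sum_div]
  exact permExp_embedding (fun y => ∏ a, B a (x a) (y a)) x

lemma permExp_augMonomialSum (b : Fin n → Fin n → ℝ) (e : Fin k → ℕ) :
    permExp (fun π => augMonomialSum (fun i => b i (π i)) e) =
      doublePowSum b e / n.descFactorial k :=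
  permExp_injSum fun a i j => b i j ^ e a

end Averaging

section Moments

variable {n : ℕ} {b : Fin n → Fin n → ℝ}

lemma permExp_sum_pow_three (hb : IsDoublyCentered b) (hn : 3 ≤ n) :
    permExp (fun π => (∑ i, b i (π i)) ^ 3) = n / ((n - 1) * (n - 2)) * ∑ i, ∑ j, b i j ^ 3 := by
  obtain ⟨m, rfl⟩ := Nat.exists_eq_add_of_le' hn
  simp only [sum_pow_three_eq_augMonomialSum, permExp_add, permExp_const_mul,
    permExp_augMonomialSum, doublePowSum_one, hb.doublePowSum_pow_one, hb.doublePowSum_one_one_one]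
  simp only [Nat.descFactorial, Nat.reduceSubDiff, Nat.add_one_sub_one, tsub_zero, mul_one,
    Nat.cast_mul, Nat.cast_add, Nat.cast_one, Nat.cast_ofNat]
  have h₁ : (m : ℝ) + 3 - 1 = m + 2 := by ring
  have h₂ : (m : ℝ) + 3 - 2 = m + 1 := by ring
  rw [h₁, h₂]
  field_simp
  ring

lemma permExp_sum_pow_four (hb : IsDoublyCentered b) (hn : 4 ≤ n) :
    permExp (fun π => (∑ i, b i (π i)) ^ 4) =
      (3 * (n ^ 2 - 3 * n + 1) * (∑ i, ∑ j, b i j ^ 2) ^ 2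
        + 6 * ∑ j, ∑ k, (∑ i, b i j * b i k) ^ 2
        - 3 * n * (n - 1) * (∑ i, (∑ j, b i j ^ 2) ^ 2 + ∑ j, (∑ i, b i j ^ 2) ^ 2)
        + n ^ 2 * (n + 1) * ∑ i, ∑ j, b i j ^ 4) / (n * (n - 1) * (n - 2) * (n - 3)) := by
  obtain ⟨m, rfl⟩ := Nat.exists_eq_add_of_le' hn
  simp only [sum_pow_four_eq_augMonomialSum, permExp_add, permExp_const_mul,
    permExp_augMonomialSum, doublePowSum_one, doublePowSum_two_two, hb.doublePowSum_pow_one,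
    hb.doublePowSum_two_one_one, hb.doublePowSum_one_one_one_one]
  simp only [Nat.descFactorial, Nat.reduceSubDiff, Nat.add_one_sub_one, tsub_zero, mul_one,
    Nat.cast_mul, Nat.cast_add, Nat.cast_one, Nat.cast_ofNat]
  have h₁ : (m : ℝ) + 4 - 1 = m + 3 := by ring
  have h₂ : (m : ℝ) + 4 - 2 = m + 2 := by ring
  have h₃ : (m : ℝ) + 4 - 3 = m + 1 := by ring
  rw [h₁, h₂, h₃]
  field_simp
  ring

end Moments

section Bounds

variable {α β : Type*} [Fintype α] [Fintype β]

lemma sum_sq_sum_le_card_mul_sum_sum_sq (f : α → β → ℝ) :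
    ∑ i, (∑ j, f i j) ^ 2 ≤ Fintype.card β * ∑ i, ∑ j, f i j ^ 2 := by
  rw [Finset.mul_sum]
  exact Finset.sum_le_sum fun i _ => sq_sum_le_card_mul_sum_sq

lemma sq_sum_sum_le_card_mul_sum_sum_sq (f : α → β → ℝ) :
    (∑ i, ∑ j, f i j) ^ 2 ≤ Fintype.card α * Fintype.card β * ∑ i, ∑ j, f i j ^ 2 := by
  rw [mul_assoc]
  exact sq_sum_le_card_mul_sum_sq.trans
    (mul_le_mul_of_nonneg_left (sum_sq_sum_le_card_mul_sum_sum_sq f) (Nat.cast_nonneg _))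

lemma sum_sum_sq_inner_columns_le (b : α → β → ℝ) :
    ∑ j, ∑ k, (∑ i, b i j * b i k) ^ 2 ≤ (∑ i, ∑ j, b i j ^ 2) ^ 2 := by
  rw [Finset.sum_comm (f := fun i j => b i j ^ 2), pow_two, Finset.sum_mul_sum]
  exact Finset.sum_le_sum fun j _ => Finset.sum_le_sum fun k _ =>
    Finset.sum_mul_sq_le_sq_mul_sq _ _ _

variable {n : ℕ} {b : Fin n → Fin n → ℝ}

lemma abs_permExp_sum_pow_three_le (hb : IsDoublyCentered b) (hn : 3 ≤ n) :
    |permExp (fun π => (∑ i, b i (π i)) ^ 3)| ≤ 5 * (∑ i, ∑ j, |b i j| ^ 3) / n := by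
  have hn' : (3 : ℝ) ≤ n := by exact_mod_cast hn
  have h₁ : (0 : ℝ) < n - 1 := by linarith
  have h₂ : (0 : ℝ) < n - 2 := by linarith
  have abs_sum_le : |∑ i, ∑ j, b i j ^ 3| ≤ ∑ i, ∑ j, |b i j| ^ 3 := by
    simp only [← abs_pow]
    exact (Finset.abs_sum_le_sum_abs _ _).trans
      (Finset.sum_le_sum fun i _ => Finset.abs_sum_le_sum_abs _ _)
  have coeff_le : (n : ℝ) / ((n - 1) * (n - 2)) ≤ 5 / n := by
    rw [div_le_div_iff₀ (by positivity) (by positivity)]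
    nlinarith
  rw [permExp_sum_pow_three hb hn, abs_mul, abs_of_nonneg (by positivity), ← div_mul_eq_mul_div]
  gcongr

lemma permExp_sum_pow_four_sub_three (hb : IsDoublyCentered b) (hn : 4 ≤ n)
    (hN : ∑ i, ∑ j, b i j ^ 2 = n - 1) :
    permExp (fun π => (∑ i, b i (π i)) ^ 4) - 3 =
      (3 * (n - 1) * (n ^ 2 - 2 * n - 1) + 6 * ∑ j, ∑ k, (∑ i, b i j * b i k) ^ 2
        - 3 * n * (n - 1) * (∑ i, (∑ j, b i j ^ 2) ^ 2 + ∑ j, (∑ i, b i j ^ 2) ^ 2)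
        + n ^ 2 * (n + 1) * ∑ i, ∑ j, b i j ^ 4) / (n * (n - 1) * (n - 2) * (n - 3)) := by
  have hn' : (4 : ℝ) ≤ n := by exact_mod_cast hn
  have h₀ : (n : ℝ) ≠ 0 := by linarith
  have h₁ : (n : ℝ) - 1 ≠ 0 := by linarith
  have h₂ : (n : ℝ) - 2 ≠ 0 := by linarith
  have h₃ : (n : ℝ) - 3 ≠ 0 := by linarith
  rw [permExp_sum_pow_four hb hn, hN]
  field_simp
  ring

lemma abs_fourth_moment_numerator_le {n f g r c : ℝ} (hn : 4 ≤ n) (hg : 0 ≤ g)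
    (hgn : g ≤ (n - 1) ^ 2) (hnf : (n - 1) ^ 2 ≤ n * n * f) (hr : 0 ≤ r) (hrf : r ≤ n * f)
    (hc : 0 ≤ c) (hcf : c ≤ n * f) :
    |3 * (n - 1) * (n ^ 2 - 2 * n - 1) + 6 * g - 3 * n * (n - 1) * (r + c) + n ^ 2 * (n + 1) * f|
      ≤ 6 * n ^ 2 * (n + 1) * f := by
  have hn₀ : 0 ≤ n := by linarith
  have hf : 0 ≤ f := nonneg_of_mul_nonneg_right (hr.trans hrf) (by linarith)
  have constant_nonneg : 0 ≤ 3 * (n - 1) * (n ^ 2 - 2 * n - 1) :=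
    mul_nonneg (by linarith) (by nlinarith)
  have constant_le : 3 * (n - 1) * (n ^ 2 - 2 * n - 1) ≤ 3 * (n - 1) * (n * n * f) :=
    mul_le_mul_of_nonneg_left (by linarith) (by linarith)
  have coeff_nonneg : 0 ≤ 3 * n * (n - 1) := mul_nonneg (by linarith) (by linarith)
  have negative_nonneg : 0 ≤ 3 * n * (n - 1) * (r + c) := mul_nonneg coeff_nonneg (by linarith)
  have negative_le : 3 * n * (n - 1) * (r + c) ≤ 3 * n * (n - 1) * (2 * n * f) :=
    mul_le_mul_of_nonneg_left (by linarith) coeff_nonneg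
  rw [abs_le]
  constructor <;> linarith [mul_nonneg (sq_nonneg n) hf, mul_nonneg (pow_nonneg hn₀ 3) hf]

lemma abs_permExp_sum_pow_four_sub_three_le (hb : IsDoublyCentered b) (hn : 4 ≤ n)
    (hN : ∑ i, ∑ j, b i j ^ 2 = n - 1) :
    |permExp (fun π => (∑ i, b i (π i)) ^ 4) - 3| ≤ 97 * (∑ i, ∑ j, b i j ^ 4) / n := by
  have rows_le := sum_sq_sum_le_card_mul_sum_sum_sq fun i j => b i j ^ 2
  have cols_le := sum_sq_sum_le_card_mul_sum_sum_sq fun j i => b i j ^ 2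
  have total_le := sq_sum_sum_le_card_mul_sum_sum_sq fun i j => b i j ^ 2
  have inner_le := sum_sum_sq_inner_columns_le b
  rw [Finset.sum_comm (f := fun j i => (b i j ^ 2) ^ 2)] at cols_le
  simp only [← pow_mul, Nat.reduceMul, Fintype.card_fin, hN] at rows_le cols_le total_le inner_le
  have hn' : (4 : ℝ) ≤ n := by exact_mod_cast hn
  have denom_pos : 0 < (n : ℝ) * (n - 1) * (n - 2) * (n - 3) := by
    have h₁ : (0 : ℝ) < n - 1 := by linarith
    have h₂ : (0 : ℝ) < n - 2 := by linarith
    have h₃ : (0 : ℝ) < n - 3 := by linarith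
    positivity
  rw [permExp_sum_pow_four_sub_three hb hn hN, abs_div, abs_of_pos denom_pos,
    div_le_div_iff₀ denom_pos (by linarith)]
  have numerator_le := abs_fourth_moment_numerator_le hn'
    (Finset.sum_nonneg fun j _ => Finset.sum_nonneg fun k _ => sq_nonneg _) inner_le total_le
    (Finset.sum_nonneg fun i _ => sq_nonneg _) rows_le
    (Finset.sum_nonneg fun j _ => sq_nonneg _) cols_le
  have coeff_le : 6 * (n : ℝ) ^ 2 * (n + 1) ≤ 97 * ((n - 1) * (n - 2) * (n - 3)) := by
    obtain ⟨m, hm, hnm⟩ : ∃ m : ℝ, 0 ≤ m ∧ (n : ℝ) = m + 4 := ⟨n - 4, by linarith, by ring⟩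
    rw [hnm]
    have difference_nonneg : 0 ≤ 91 * m ^ 3 + 504 * m ^ 2 + 731 * m + 102 := by positivity
    linarith
  calc _ ≤ 6 * (n : ℝ) ^ 2 * (n + 1) * (∑ i, ∑ j, b i j ^ 4) * n := by gcongr
    _ ≤ 97 * ((n - 1) * (n - 2) * (n - 3)) * (∑ i, ∑ j, b i j ^ 4) * n := by gcongr
    _ = _ := by ring

end Bounds

section RankStatistic

variable {n : ℕ} (A : Matrix (Fin n) (Fin n) ℝ)

lemma isDoublyCentered_ctr : IsDoublyCentered (ctr A) where
  row_sum_eq_zero i := by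
    have hn : (n : ℝ) ≠ 0 := Nat.cast_ne_zero.mpr i.pos.ne'
    simp only [ctr, rowMean, colMean, totMean, Finset.sum_add_distrib, Finset.sum_sub_distrib,
      ← Finset.sum_div, Finset.sum_const, Finset.card_univ, Fintype.card_fin, nsmul_eq_mul]
    rw [Finset.sum_comm (f := fun j i => A i j)]
    field_simp
    ring
  col_sum_eq_zero j := by
    have hn : (n : ℝ) ≠ 0 := Nat.cast_ne_zero.mpr j.pos.ne'
    simp only [ctr, rowMean, colMean, totMean, Finset.sum_add_distrib, Finset.sum_sub_distrib,
      ← Finset.sum_div, Finset.sum_const, Finset.card_univ, Fintype.card_fin, nsmul_eq_mul]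
    field_simp
    ring

lemma isDoublyCentered_hatM : IsDoublyCentered (hatM A) where
  row_sum_eq_zero i := by
    simp only [hatM, ← Finset.sum_div, (isDoublyCentered_ctr A).row_sum_eq_zero, zero_div]
  col_sum_eq_zero j := by
    simp only [hatM, ← Finset.sum_div, (isDoublyCentered_ctr A).col_sum_eq_zero, zero_div]

lemma rankTstd_eq_sum_hatM (π : Equiv.Perm (Fin n)) :
    rankTstd A π = ∑ i, hatM A i (π i) := by
  simp only [rankTstd, hatM, ← Finset.sum_div]
  congr 1
  simp only [ctr, rankT, muM, Finset.sum_add_distrib, Finset.sum_sub_distrib,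
    Finset.sum_const, Finset.card_univ, Fintype.card_fin, nsmul_eq_mul]
  rw [Equiv.sum_comp π (fun j => colMean A j)]
  simp only [rowMean, colMean, totMean, ← Finset.sum_div]
  rw [Finset.sum_comm (f := fun j i => A i j)]
  obtain rfl | hn := eq_or_ne n 0
  · simp
  field_simp
  ring

lemma sum_hatM_sq (hn : 2 ≤ n) (hA : 0 < sdev A) : ∑ i, ∑ j, hatM A i j ^ 2 = n - 1 := by
  have hn' : (n : ℝ) - 1 ≠ 0 := by
    have : (2 : ℝ) ≤ n := by exact_mod_cast hn
    linarith
  have sigma2_pos : 0 < sigma2 A := Real.sqrt_pos.mp hA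
  have sdev_sq : sdev A ^ 2 = sigma2 A := Real.sq_sqrt sigma2_pos.le
  simp only [hatM, div_pow, ← Finset.sum_div, sdev_sq]
  rw [div_eq_iff sigma2_pos.ne', sigma2]
  field_simp

end RankStatistic

/-- `|E(𝒯_A³)| ≤ 5β_A/n` for `n ≥ 3` and `|E(𝒯_A⁴) − 3| ≤ 97δ_A/n` for `n ≥ 4`. -/
theorem rank_statistic_moment_bounds (n : ℕ) (hn : 2 ≤ n)
    (A : Matrix (Fin n) (Fin n) ℝ) (hA : 0 < sdev A) :
    (3 ≤ n → |permExp (fun π => rankTstd A π ^ 3)| ≤ 5 * betaM A / (n : ℝ)) ∧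
    (4 ≤ n → |permExp (fun π => rankTstd A π ^ 4) - 3| ≤ 97 * deltaM A / (n : ℝ)) := by
  have centered := isDoublyCentered_hatM A
  have deltaM_eq : deltaM A = ∑ i, ∑ j, hatM A i j ^ 4 := by
    simp only [deltaM, Even.pow_abs (by decide : Even 4)]
  simp only [rankTstd_eq_sum_hatM]
  refine ⟨abs_permExp_sum_pow_three_le centered, fun h4 => ?_⟩
  rw [deltaM_eq]
  exact abs_permExp_sum_pow_four_sub_three_le centered h4 (sum_hatM_sq A hn hA)
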